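/- arXiv:2307.01358 — 2 statements merged into one kernel-verified Lean document; each statement's English description precedes it below -/
import Mathlib

section
/- Shift operator of H₆ for the block shift sh₁ (Theorem on shift operators of H₆, first case): for all e ∈ ℂ⁹ and u ∈ ℂ, with α₁ := s₁₃ + s₂₃ + 1 (computed from e), the identity H₆(sh₁(e), u − α₁) ∘ ((x−1)·∂ + s) = ((x−1)·∂ + s + 3) ∘ H₆(e,u) holds in End_ℂ(ℂ[x]). -/
open Polynomial

noncomputable section

abbrev EndP := Module.End ℂ (Polynomial ℂ)

/-- The formal derivative `∂` as a linear endomorphism of `ℂ[x]`. -/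
def D : EndP := Polynomial.derivative

/-- Multiplication by the polynomial `p` as a linear endomorphism of `ℂ[x]`. -/
def M (p : Polynomial ℂ) : EndP := LinearMap.mulLeft ℂ p

/-- The Euler operator `θ = x·∂`. -/
def θop : EndP := M X * D

/-- `s = (6 − e₁ − ⋯ − e₉)/3`. -/
def sC (e1 e2 e3 e4 e5 e6 e7 e8 e9 : ℂ) : ℂ :=
  (6 - e1 - e2 - e3 - e4 - e5 - e6 - e7 - e8 - e9) / 3

def T12C (e1 e2 e3 _e4 _e5 _e6 e7 e8 e9 : ℂ) : ℂ :=
  (e1 + e2 + e3) - 2 * (e7 + e8 + e9) - 9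

def T11C (e1 e2 e3 e4 e5 e6 e7 e8 e9 : ℂ) : ℂ :=
  let s11 := e1 + e2 + e3;
  let s12 := e4 + e5 + e6;
  let s13 := e7 + e8 + e9;
  let s21 := e1*e2 + e1*e3 + e2*e3;
  let s22 := e4*e5 + e4*e6 + e5*e6;
  let s23 := e7*e8 + e7*e9 + e8*e9;
  -8 + (s11^2 + 2*s11*s13 - s12^2 + s13^2)/3 + s11 - 5*s13 - s21 + s22 - 2*s23

def T22C (e1 e2 e3 _e4 _e5 _e6 e7 e8 e9 : ℂ) : ℂ :=
  -2 * (e1 + e2 + e3) + (e7 + e8 + e9) + 18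

def T21C (e1 e2 e3 e4 e5 e6 e7 e8 e9 : ℂ) : ℂ :=
  let s11 := e1 + e2 + e3;
  let s12 := e4 + e5 + e6;
  let s13 := e7 + e8 + e9;
  let s21 := e1*e2 + e1*e3 + e2*e3;
  let s22 := e4*e5 + e4*e6 + e5*e6;
  let s23 := e7*e8 + e7*e9 + e8*e9;
  35 + (-s11^2 - 2*s11*s13 + s12^2 - s13^2)/3 - 7*s11 + 5*s13 + 2*s21 - s22 + s23

def T20C (e1 e2 e3 e4 e5 e6 e7 e8 e9 u : ℂ) : ℂ :=
  let s11 := e1 + e2 + e3;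
  let s12 := e4 + e5 + e6;
  let s13 := e7 + e8 + e9;
  let s21 := e1*e2 + e1*e3 + e2*e3;
  let s22 := e4*e5 + e4*e6 + e5*e6;
  let s31 := e1*e2*e3;
  let s32 := e4*e5*e6;
  let s33 := e7*e8*e9;
  -u + 19 + (s11^2*s13 - s11*s12^2 + s11*s13^2 - s12^2*s13)/9
    + (s13^3 + s11^3 - 2*s12^3)/27
    + (-2*s11^2 - 4*s11*s13 + s11*s22 + 2*s12^2 + s22*s12 - 2*s13^2 + s22*s13)/3
    - 5*s11 + 4*s13 + 3*s21 - 2*s22 - s31 - s32 - s33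

/-- `B₀(t) = (t+e₇)(t+e₈)(t+e₉)`. -/
def B0op (e7 e8 e9 : ℂ) (t : EndP) : EndP :=
  (t + e7 • 1) * (t + e8 • 1) * (t + e9 • 1)

/-- `B₁(t) = −3t³ + T₁₂t² + T₁₁t + u`. -/
def B1op (e1 e2 e3 e4 e5 e6 e7 e8 e9 u : ℂ) (t : EndP) : EndP :=
  (-3 : ℂ) • t ^ 3 + (T12C e1 e2 e3 e4 e5 e6 e7 e8 e9) • t ^ 2
    + (T11C e1 e2 e3 e4 e5 e6 e7 e8 e9) • t + u • 1

/-- `B₂(t) = 3t³ + T₂₂t² + T₂₁t + T₂₀`. -/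
def B2op (e1 e2 e3 e4 e5 e6 e7 e8 e9 u : ℂ) (t : EndP) : EndP :=
  (3 : ℂ) • t ^ 3 + (T22C e1 e2 e3 e4 e5 e6 e7 e8 e9) • t ^ 2
    + (T21C e1 e2 e3 e4 e5 e6 e7 e8 e9) • t + (T20C e1 e2 e3 e4 e5 e6 e7 e8 e9 u) • 1

/-- `T₃(t) = −(t+3−e₁)(t+3−e₂)(t+3−e₃)`. -/
def T3op (e1 e2 e3 : ℂ) (t : EndP) : EndP :=
  -((t + (3 - e1) • 1) * (t + (3 - e2) • 1) * (t + (3 - e3) • 1))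

/-- The operator `H₆(e,u)`. -/
def H6op (e1 e2 e3 e4 e5 e6 e7 e8 e9 u : ℂ) : EndP :=
  let s := sC e1 e2 e3 e4 e5 e6 e7 e8 e9;
  (θop + (s + 2) • 1) * (θop + (s + 1) • 1) * (θop + s • 1) * B0op e7 e8 e9 θop
    + (θop + (s + 2) • 1) * (θop + (s + 1) • 1) * B1op e1 e2 e3 e4 e5 e6 e7 e8 e9 u θop * D
    + (θop + (s + 2) • 1) * B2op e1 e2 e3 e4 e5 e6 e7 e8 e9 u θop * D ^ 2
    + T3op e1 e2 e3 θop * D ^ 3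

/-!
Write `H₆(e, u) = ∑ₖ (θ+s+k)⋯(θ+s+2) Bₖ(θ) ∂ᵏ` and `(x-1)∂ = θ - ∂`. The coefficients satisfy
`B₀ + B₁ + B₂ + B₃ = -(s+e₄)(s+e₅)(s+e₆)`, which does not involve `θ`. Move every power of `∂` to
the right by `∂ p(θ) = p(θ+1) ∂`. If the left factor has the coefficients `Bₖ + Δₖ`, where
`Δₖ(θ) = ∑_{j<k} (Bⱼ(θ) - Bⱼ(θ+1))`, then the difference of the two sides telescopes, with terms
`(θ+s+k)⋯(θ+s+3) Δₖ(θ) ∂ᵏ`; it vanishes because `Δ₀ = 0` and, the sum of the `Bⱼ` being constant,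
`Δ₄ = 0`. Finally, the `Bₖ + Δₖ` are the coefficients of `H₆(sh₁(e), u - α₁)`: the shift
`-α₁ = B₀(0) - B₀(1)` of `u` is the constant term of `Δ₁`.
-/

section Semiconj

variable {R A : Type*} [CommSemiring R] [Semiring A] [Algebra R A]

theorem semiconjBy_aeval {d x y : A} (h : SemiconjBy d x y) (p : R[X]) :
    SemiconjBy d (aeval x p) (aeval y p) := by
  induction p using Polynomial.induction_on' with
  | add p q hp hq => simpa only [map_add] using hp.add_right hq
  | monomial n a =>
    simpa only [aeval_monomial] using
      SemiconjBy.mul_right (Algebra.commutes a d).symm (h.pow_right n)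

theorem semiconjBy_aeval_taylor {d θ : A} (h : SemiconjBy d θ (θ + 1)) (p : R[X]) :
    SemiconjBy d (aeval θ p) (aeval θ (taylor 1 p)) := by
  simpa [taylor_apply, aeval_comp] using semiconjBy_aeval h p

theorem semiconjBy_pow_aeval_taylor {d θ : A} (h : SemiconjBy d θ (θ + 1)) (k : ℕ) (p : R[X]) :
    SemiconjBy (d ^ k) (aeval θ p) (aeval θ (taylor (k : R) p)) := by
  induction k with
  | zero => simp
  | succ k ih =>
    simpa only [pow_succ', Nat.cast_succ, taylor_taylor, add_comm] using
      (semiconjBy_aeval_taylor h _).mul_left ih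

end Semiconj

section ThetaOp

variable {R : Type*} [CommSemiring R]

/-- The product `(X + s + k)(X + s + k + 1)⋯(X + s + n - 1)`, the factor in front of `Bₖ(θ)` in the
operators considered here; it is `1` when `n ≤ k`. -/
def thetaProd (s : R) (k n : ℕ) : R[X] :=
  ∏ j ∈ Finset.Ico k n, (X + C (s + j))

theorem thetaProd_succ_right (s : R) {k n : ℕ} (h : k ≤ n) :
    thetaProd s k (n + 1) = (X + C (s + n)) * thetaProd s k n := by
  rw [thetaProd, Finset.prod_Ico_succ_top h, mul_comm, thetaProd]

theorem thetaProd_succ_left_mul (s : R) {k n : ℕ} (h : k < n) :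
    thetaProd s (k + 1) n * (X + C (s + k)) = thetaProd s k n := by
  rw [thetaProd, thetaProd, Finset.prod_eq_prod_Ico_succ_bot h, mul_comm]

theorem thetaProd_add_one (s : R) (k n : ℕ) :
    thetaProd (s + 1) k n = thetaProd s (k + 1) (n + 1) := by
  rw [thetaProd, thetaProd, ← Finset.prod_Ico_add']
  refine Finset.prod_congr rfl fun j _ => ?_
  rw [Nat.cast_succ, add_assoc, add_comm 1]

theorem taylor_one_thetaProd (s : R) (k n : ℕ) :
    taylor 1 (thetaProd s k n) = thetaProd s (k + 1) (n + 1) := by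
  rw [← thetaProd_add_one, thetaProd, thetaProd, ← taylorAlgHom_apply, map_prod]
  refine Finset.prod_congr rfl fun j _ => ?_
  simp only [taylorAlgHom_apply, map_add, taylor_X, taylor_C]
  ring

/-- The operator `∑ₖ (θ+s+k)⋯(θ+s+n-1) bₖ(θ) dᵏ`, `0 ≤ k ≤ n`, in the normal form with all powers
of `d` on the right; `H₆` is the case `n = 3`. Only the values `b 0, …, b n` matter. -/
def thetaOp {A : Type*} [Semiring A] [Algebra R A] (θ d : A) (n : ℕ) (s : R)
    (b : ℕ → R[X]) : A :=
  ∑ k ∈ Finset.range (n + 1), aeval θ (thetaProd s k n * b k) * d ^ k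

end ThetaOp

section Intertwining

variable {R A : Type*} [CommRing R] [Ring A] [Algebra R A] {θ d : A}

theorem sub_add_smul_one_eq_aeval_sub (θ d : A) (s : R) :
    θ - d + s • (1 : A) = aeval θ (X + C s) - d := by
  rw [map_add, aeval_X, aeval_C, Algebra.algebraMap_eq_smul_one]
  abel

theorem aeval_mul_pow_mul_sub_add (h : SemiconjBy d θ (θ + 1)) (p : R[X]) (s : R) (k : ℕ) :
    aeval θ p * d ^ k * (θ - d + s • (1 : A))
      = aeval θ (p * (X + C (s + k))) * d ^ k - aeval θ p * d ^ (k + 1) := by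
  have hk : d ^ k * aeval θ (X + C s) = aeval θ (X + C (s + k)) * d ^ k := by
    rw [(semiconjBy_pow_aeval_taylor h k (X + C s)).eq, map_add (taylor _), taylor_X, taylor_C,
      add_assoc, ← C_add, add_comm s]
  rw [sub_add_smul_one_eq_aeval_sub, mul_sub, mul_assoc, hk, map_mul, pow_succ, mul_assoc,
    mul_assoc]

theorem sub_add_mul_aeval_mul_pow (h : SemiconjBy d θ (θ + 1)) (p : R[X]) (s : R) (k : ℕ) :
    (θ - d + s • (1 : A)) * (aeval θ p * d ^ k)
      = aeval θ ((X + C s) * p) * d ^ k - aeval θ (taylor 1 p) * d ^ (k + 1) := by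
  rw [sub_add_smul_one_eq_aeval_sub, sub_mul, ← mul_assoc, ← map_mul, ← mul_assoc d,
    (semiconjBy_aeval_taylor h p).eq, mul_assoc _ d, ← pow_succ']

theorem thetaOp_mul_sub_add (h : SemiconjBy d θ (θ + 1)) (n : ℕ) (s : R) (c : ℕ → R[X]) :
    thetaOp θ d n (s + 1) c * (θ - d + s • (1 : A))
      = ∑ k ∈ Finset.range (n + 1), (aeval θ (thetaProd s k (n + 1) * c k) * d ^ k
          - aeval θ (thetaProd s (k + 1) (n + 1) * c k) * d ^ (k + 1)) := by
  rw [thetaOp, Finset.sum_mul]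
  refine Finset.sum_congr rfl fun k hk => ?_
  rw [aeval_mul_pow_mul_sub_add h, thetaProd_add_one, mul_right_comm,
    thetaProd_succ_left_mul s (Finset.mem_range.mp hk)]

theorem sub_add_mul_thetaOp (h : SemiconjBy d θ (θ + 1)) (n : ℕ) (s : R) (b : ℕ → R[X]) :
    (θ - d + (s + n) • (1 : A)) * thetaOp θ d n s b
      = ∑ k ∈ Finset.range (n + 1), (aeval θ (thetaProd s k (n + 1) * b k) * d ^ k
          - aeval θ (thetaProd s (k + 1) (n + 1) * taylor 1 (b k)) * d ^ (k + 1)) := by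
  rw [thetaOp, Finset.mul_sum]
  refine Finset.sum_congr rfl fun k hk => ?_
  rw [sub_add_mul_aeval_mul_pow h, taylor_mul, taylor_one_thetaProd, ← mul_assoc,
    thetaProd_succ_right s (Finset.mem_range_succ_iff.mp hk)]

theorem thetaOp_intertwining (h : SemiconjBy d θ (θ + 1)) (n : ℕ) (s : R) {b c : ℕ → R[X]}
    (hb : taylor 1 (∑ k ∈ Finset.range (n + 1), b k) = ∑ k ∈ Finset.range (n + 1), b k)
    (hc : ∀ k ≤ n, c k = b k + ∑ j ∈ Finset.range k, (b j - taylor 1 (b j))) :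
    thetaOp θ d n (s + 1) c * (θ - d + s • (1 : A))
      = (θ - d + (s + n) • (1 : A)) * thetaOp θ d n s b := by
  let Δ (k : ℕ) : R[X] := ∑ j ∈ Finset.range k, (b j - taylor 1 (b j))
  let T (k : ℕ) : A := aeval θ (thetaProd s k (n + 1) * Δ k) * d ^ k
  have hΔ_zero : Δ 0 = 0 := Finset.sum_range_zero _
  have hΔ_last : Δ (n + 1) = 0 := by
    simp only [Δ, Finset.sum_sub_distrib, ← map_sum, hb, sub_self]
  rw [← sub_eq_zero, thetaOp_mul_sub_add h, sub_add_mul_thetaOp h, ← Finset.sum_sub_distrib]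
  calc
    _ = ∑ k ∈ Finset.range (n + 1), (T k - T (k + 1)) := by
      refine Finset.sum_congr rfl fun k hk => ?_
      have hck : c k = b k + Δ k := hc k (Finset.mem_range_succ_iff.mp hk)
      have hΔ_succ : Δ (k + 1) = c k - taylor 1 (b k) := by
        simp only [hck, Δ, Finset.sum_range_succ]
        ring
      simp only [T, hΔ_succ, hck, mul_add, mul_sub, map_add, map_sub, add_mul, sub_mul]
      abel
    _ = T 0 - T (n + 1) := Finset.sum_range_sub' T (n + 1)
    _ = 0 := by simp only [T, hΔ_zero, hΔ_last, mul_zero, map_zero, zero_mul, sub_zero]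

end Intertwining

section H6

/-- The coefficients `B₀, B₁, B₂, B₃ = T₃` of `H₆(e, u)`, as polynomials in `θ`. -/
def H6coeff (e1 e2 e3 e4 e5 e6 e7 e8 e9 u : ℂ) : ℕ → ℂ[X]
  | 0 => (X + C e7) * (X + C e8) * (X + C e9)
  | 1 => C (-3) * X ^ 3 + C (T12C e1 e2 e3 e4 e5 e6 e7 e8 e9) * X ^ 2
      + C (T11C e1 e2 e3 e4 e5 e6 e7 e8 e9) * X + C u
  | 2 => C 3 * X ^ 3 + C (T22C e1 e2 e3 e4 e5 e6 e7 e8 e9) * X ^ 2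
      + C (T21C e1 e2 e3 e4 e5 e6 e7 e8 e9) * X + C (T20C e1 e2 e3 e4 e5 e6 e7 e8 e9 u)
  | 3 => -((X + C (3 - e1)) * (X + C (3 - e2)) * (X + C (3 - e3)))
  | _ => 0

theorem H6op_eq_thetaOp (e1 e2 e3 e4 e5 e6 e7 e8 e9 u : ℂ) :
    H6op e1 e2 e3 e4 e5 e6 e7 e8 e9 u
      = thetaOp θop D 3 (sC e1 e2 e3 e4 e5 e6 e7 e8 e9)
          (H6coeff e1 e2 e3 e4 e5 e6 e7 e8 e9 u) := by
  set s := sC e1 e2 e3 e4 e5 e6 e7 e8 e9 with hs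
  have h3 : thetaProd s 3 3 = 1 := by simp [thetaProd]
  have h2 : thetaProd s 2 3 = X + C (s + 2) := by simp [thetaProd, -map_add]
  have h1 : thetaProd s 1 3 = (X + C (s + 2)) * (X + C (s + 1)) := by
    simpa [h2] using (thetaProd_succ_left_mul s (show 1 < 3 by norm_num)).symm
  have h0 : thetaProd s 0 3 = (X + C (s + 2)) * (X + C (s + 1)) * (X + C s) := by
    simpa [h1] using (thetaProd_succ_left_mul s (show 0 < 3 by norm_num)).symm
  simp only [H6op, B0op, B1op, B2op, T3op, ← hs, thetaOp, h0, h1, h2, h3, H6coeff,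
    Finset.sum_range_succ, Finset.sum_range_zero, map_mul (aeval θop), map_add (aeval θop),
    map_neg (aeval (R := ℂ) θop), map_pow (aeval θop), map_one (aeval θop), aeval_X, aeval_C,
    Algebra.algebraMap_eq_smul_one, smul_mul_assoc, one_mul, zero_add, pow_zero, pow_one, mul_one,
    mul_assoc]

theorem sum_H6coeff (e1 e2 e3 e4 e5 e6 e7 e8 e9 u : ℂ) :
    ∑ k ∈ Finset.range 4, H6coeff e1 e2 e3 e4 e5 e6 e7 e8 e9 u k
      = C (-((sC e1 e2 e3 e4 e5 e6 e7 e8 e9 + e4) * (sC e1 e2 e3 e4 e5 e6 e7 e8 e9 + e5)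
          * (sC e1 e2 e3 e4 e5 e6 e7 e8 e9 + e6))) := by
  refine Polynomial.funext fun t => ?_
  simp only [Finset.sum_range_succ, Finset.sum_range_zero, H6coeff, T12C, T11C, T22C, T21C, T20C,
    sC, eval_add, eval_mul, eval_neg, eval_pow, eval_X, eval_C, eval_zero]
  ring

theorem H6coeff_sh1 (e1 e2 e3 e4 e5 e6 e7 e8 e9 u : ℂ) {k : ℕ} (hk : k ≤ 3) :
    H6coeff (e1 - 1) (e2 - 1) (e3 - 1) e4 e5 e6 e7 e8 e9
        (u - ((e7 + e8 + e9) + (e7*e8 + e7*e9 + e8*e9) + 1)) k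
      = H6coeff e1 e2 e3 e4 e5 e6 e7 e8 e9 u k
        + ∑ j ∈ Finset.range k, (H6coeff e1 e2 e3 e4 e5 e6 e7 e8 e9 u j
            - taylor 1 (H6coeff e1 e2 e3 e4 e5 e6 e7 e8 e9 u j)) := by
  refine Polynomial.funext fun t => ?_
  interval_cases k <;>
  · simp only [Finset.sum_range_succ, Finset.sum_range_zero, H6coeff, T12C, T11C, T22C, T21C, T20C,
      taylor_eval, eval_add, eval_sub, eval_mul, eval_neg, eval_pow, eval_X, eval_C, eval_zero]
    ring

theorem sC_sh1 (e1 e2 e3 e4 e5 e6 e7 e8 e9 : ℂ) :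
    sC (e1 - 1) (e2 - 1) (e3 - 1) e4 e5 e6 e7 e8 e9 = sC e1 e2 e3 e4 e5 e6 e7 e8 e9 + 1 := by
  simp only [sC]
  ring

theorem semiconjBy_D_θop : SemiconjBy D θop (θop + 1) := by
  refine LinearMap.ext fun p => ?_
  simp [D, θop, M, add_comm]

theorem M_X_sub_one_mul_D : M (X - 1) * D = θop - D := by
  refine LinearMap.ext fun p => ?_
  simp [D, θop, M, sub_mul]

theorem H6_shift_operator_sh1_general {A : Type*} [Ring A] [Algebra ℂ A] {θ d : A}
    (h : SemiconjBy d θ (θ + 1)) (e1 e2 e3 e4 e5 e6 e7 e8 e9 u s : ℂ) :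
    thetaOp θ d 3 (s + 1) (H6coeff (e1 - 1) (e2 - 1) (e3 - 1) e4 e5 e6 e7 e8 e9
        (u - ((e7 + e8 + e9) + (e7*e8 + e7*e9 + e8*e9) + 1)))
      * (θ - d + s • (1 : A))
    = (θ - d + (s + 3) • (1 : A)) * thetaOp θ d 3 s (H6coeff e1 e2 e3 e4 e5 e6 e7 e8 e9 u) := by
  refine thetaOp_intertwining h 3 s ?_ fun k hk => H6coeff_sh1 e1 e2 e3 e4 e5 e6 e7 e8 e9 u hk
  rw [sum_H6coeff, taylor_C]

end H6

/-- Shift operator of `H₆` for the block shift `sh₁ : (e₁,e₂,e₃) → (e₁−1,e₂−1,e₃−1)`: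
`H₆(sh₁(e), u − α₁) ∘ ((x−1)∂ + s) = ((x−1)∂ + s + 3) ∘ H₆(e,u)` where
`α₁ = s₁₃ + s₂₃ + 1`. -/
theorem H6_shift_operator_sh1 (e1 e2 e3 e4 e5 e6 e7 e8 e9 u : ℂ) :
    H6op (e1 - 1) (e2 - 1) (e3 - 1) e4 e5 e6 e7 e8 e9
        (u - ((e7 + e8 + e9) + (e7*e8 + e7*e9 + e8*e9) + 1))
      * (M (X - 1) * D + (sC e1 e2 e3 e4 e5 e6 e7 e8 e9) • 1)
    = (M (X - 1) * D + (sC e1 e2 e3 e4 e5 e6 e7 e8 e9 + 3) • 1)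
      * H6op e1 e2 e3 e4 e5 e6 e7 e8 e9 u := by
  rw [H6op_eq_thetaOp, H6op_eq_thetaOp, sC_sh1, M_X_sub_one_mul_D]
  exact H6_shift_operator_sh1_general semiconjBy_D_θop e1 e2 e3 e4 e5 e6 e7 e8 e9 u _
end
end

section
/- Shift operators of H₅ for the descending block shifts: for all (e₁,…,e₈) ∈ ℂ⁸ and u ∈ ℂ, there exist u′, u″ ∈ ℂ such that H₅(e₁−1, e₂−1, e₃−1, e₄, e₅, e₆, e₇, e₈, u′) ∘ ((x−1)·∂ + 1 − r) = ((x−1)·∂ + 3 − r) ∘ H₅(e,u) and H₅(e₁, e₂, e₃, e₄−1, e₅−1, e₆−1, e₇, e₈, u″) ∘ (x·∂ + 1 − r) = (x·∂ + 3 − r) ∘ H₅(e,u) hold in End_ℂ(ℂ[x]), where r := (e₁+⋯+e₈−6)/3 is computed from e. -/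
open Polynomial

noncomputable section

/-- The operator `H₅(e₁,…,e₈,u)`, obtained from `H₆` at `e₉ = 0` by dividing by `∂`
from the right; here `r = (e₁+⋯+e₈−6)/3` and `B₅₁, B₅₂` are `B₁, B₂` at `e₉ = 0`. -/
def H5op (e1 e2 e3 e4 e5 e6 e7 e8 u : ℂ) : EndP :=
  let r := (e1 + e2 + e3 + e4 + e5 + e6 + e7 + e8 - 6) / 3;
  M X * ((θop + (1 - r) • 1) * (θop + (2 - r) • 1) * (θop + (3 - r) • 1)
      * (θop + (e7 + 1) • 1) * (θop + (e8 + 1) • 1))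
    + (θop + (1 - r) • 1) * (θop + (2 - r) • 1) * B1op e1 e2 e3 e4 e5 e6 e7 e8 0 u θop
    + (θop + (2 - r) • 1) * B2op e1 e2 e3 e4 e5 e6 e7 e8 0 u θop * D
    - (θop + (3 - e1) • 1) * (θop + (3 - e2) • 1) * (θop + (3 - e3) • 1) * D ^ 2

/-!
Every polynomial `f(θ)` satisfies `∂ ∘ f(θ) = f(θ + 1) ∘ ∂` and `x ∘ f(θ) = f(θ - 1) ∘ x`, so both
sides of each identity can be written as `a(θ)x + b(θ) + c(θ)∂ + e(θ)∂² + f(θ)∂³`, and they agree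
as soon as these coefficients do. The linear factors in `θ - r` cancel from the coefficient
identities, leaving a recursion between `B₀, B₁, B₂, T₃` and their shifts. Both shifts are the
case `δ ∈ {0, 1}` of one intertwining relation by `(x - δ)∂ + const`; for `δ = 1`, the constant term
of the recursion forces `u - u' = B₀(1) - B₀(0)`.
-/

section Semiring

variable {R A : Type*} [CommSemiring R] [Semiring A] [Algebra R A]

theorem semiconjBy_aeval_s17 {a b c : A} (h : SemiconjBy a b c) (f : R[X]) :
    SemiconjBy a (aeval b f) (aeval c f) := by
  induction f using Polynomial.induction_on' with
  | add f g hf hg => simpa only [map_add] using hf.add_right hg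
  | monomial n r =>
    simpa only [aeval_monomial] using
      SemiconjBy.mul_right (Algebra.commutes r a).symm (h.pow_right n)

theorem aeval_taylor (r : R) (f : R[X]) (a : A) :
    aeval a (taylor r f) = aeval (a + algebraMap R A r) f := by
  rw [taylor_apply, aeval_comp, map_add, aeval_X, aeval_C]

theorem d_mul_aeval_euler {x d : A} (h : d * x = x * d + 1) (f : R[X]) :
    d * aeval (x * d) f = aeval (x * d) (taylor 1 f) * d := by
  have hθ : SemiconjBy d (x * d) (x * d + algebraMap R A 1) := by
    rw [map_one, ← h]
    exact (mul_assoc d x d).symm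
  rw [aeval_taylor]
  exact semiconjBy_aeval_s17 hθ f

end Semiring

section WeightExpansion

variable {R A : Type*} [CommRing R] [Ring A] [Algebra R A] {x d : A}

theorem x_mul_aeval_euler (h : d * x = x * d + 1) (f : R[X]) :
    x * aeval (x * d) f = aeval (x * d) (taylor (-1) f) * x := by
  have hθ : SemiconjBy x (x * d) (x * d + algebraMap R A (-1)) := by
    rw [map_neg, map_one, ← sub_eq_add_neg, SemiconjBy, sub_mul, one_mul, mul_assoc x d x, h]
    noncomm_ring
  rw [aeval_taylor]
  exact semiconjBy_aeval_s17 hθ f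

/-- The operator `a(θ)x + b(θ) + c(θ)∂ + e(θ)∂²` with `θ = x∂`, expanded by weight with its
coefficients on the left; `x` and `d` are the generators of a Weyl algebra. -/
def weightExpansion (x d : A) (a b c e : R[X]) : A :=
  aeval (x * d) a * x + aeval (x * d) b + aeval (x * d) c * d + aeval (x * d) e * d ^ 2

theorem weightExpansion_sub_smul (δ : R) (a b c e a' b' c' e' : R[X]) :
    weightExpansion x d (a - δ • a') (b - δ • b') (c - δ • c') (e - δ • e') =
      weightExpansion x d a b c e - δ • weightExpansion x d a' b' c' e' := by
  simp only [weightExpansion, map_sub, map_smul, sub_mul, smul_mul_assoc, smul_add]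
  abel

theorem aeval_euler_mul_weightExpansion (f a b c e : R[X]) :
    aeval (x * d) f * weightExpansion x d a b c e =
      weightExpansion x d (f * a) (f * b) (f * c) (f * e) := by
  simp only [weightExpansion, map_mul, mul_add, mul_assoc]

theorem weightExpansion_mul_aeval_euler (h : d * x = x * d + 1) (a b c e f : R[X]) :
    weightExpansion x d a b c e * aeval (x * d) f =
      weightExpansion x d (a * taylor (-1) f) (b * f) (c * taylor 1 f) (e * taylor 2 f) := by
  have hd2 : d ^ 2 * aeval (x * d) f = aeval (x * d) (taylor 2 f) * d ^ 2 := by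
    rw [pow_two, mul_assoc, d_mul_aeval_euler h, ← mul_assoc,
      d_mul_aeval_euler h, taylor_taylor, one_add_one_eq_two, mul_assoc]
  simp only [weightExpansion, add_mul, map_mul, mul_assoc, x_mul_aeval_euler h,
    d_mul_aeval_euler h, hd2]

theorem weightExpansion_mul_d (a b c e : R[X]) :
    weightExpansion x d a b c e * d =
      weightExpansion x d 0 (a * X) b c + aeval (x * d) e * d ^ 3 := by
  simp only [weightExpansion, map_mul, map_zero, aeval_X]
  noncomm_ring

theorem d_mul_weightExpansion (h : d * x = x * d + 1) (a b c e : R[X]) :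
    d * weightExpansion x d a b c e =
      weightExpansion x d 0 (taylor 1 (X * a)) (taylor 1 b) (taylor 1 c) +
        aeval (x * d) (taylor 1 e) * d ^ 3 := by
  have ha : d * (aeval (x * d) a * x) = aeval (x * d) (taylor 1 (X * a)) := by
    rw [← mul_assoc, d_mul_aeval_euler h, mul_assoc, h, mul_comm X a, taylor_mul, taylor_X,
      C_1, map_mul, map_add, aeval_X, map_one]
  simp only [weightExpansion, mul_add, ha, ← mul_assoc, d_mul_aeval_euler h, map_zero]
  noncomm_ring

theorem sub_smul_mul_add_smul_eq_aeval (δ s : R) :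
    (x - δ • 1) * d + s • 1 = aeval (x * d) (X + C s) - δ • d := by
  simp [sub_mul, Algebra.algebraMap_eq_smul_one, sub_add_eq_add_sub]

theorem weightExpansion_intertwines (h : d * x = x * d + 1) {δ s t : R}
    {a b c e a' b' c' e' : R[X]}
    (hx : a' * (X + C (s - 1)) = (X + C t) * a)
    (h1 : b' * (X + C s) - δ • (a' * X) = (X + C t) * b - δ • taylor 1 (X * a))
    (hd : c' * (X + C (s + 1)) - δ • b' = (X + C t) * c - δ • taylor 1 b)
    (hd2 : e' * (X + C (s + 2)) - δ • c' = (X + C t) * e - δ • taylor 1 c)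
    (hd3 : δ • e' = δ • taylor 1 e) :
    weightExpansion x d a' b' c' e' * ((x - δ • 1) * d + s • 1) =
      ((x - δ • 1) * d + t • 1) * weightExpansion x d a b c e := by
  have taylor_linear (z : R) : taylor z (X + C s) = X + C (s + z) := by
    rw [map_add, taylor_X, taylor_C, add_assoc, ← C_add, add_comm z s]
  calc weightExpansion x d a' b' c' e' * ((x - δ • 1) * d + s • 1)
      = weightExpansion x d a' b' c' e' * aeval (x * d) (X + C s)
          - δ • (weightExpansion x d a' b' c' e' * d) := by
        rw [sub_smul_mul_add_smul_eq_aeval, mul_sub, mul_smul_comm]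
    _ = weightExpansion x d (a' * (X + C (s - 1)) - δ • 0) (b' * (X + C s) - δ • (a' * X))
          (c' * (X + C (s + 1)) - δ • b') (e' * (X + C (s + 2)) - δ • c')
          - aeval (x * d) (δ • e') * d ^ 3 := by
        rw [weightExpansion_mul_aeval_euler h, weightExpansion_mul_d, weightExpansion_sub_smul,
          smul_add, ← sub_sub, map_smul, smul_mul_assoc]
        simp only [taylor_linear, ← sub_eq_add_neg]
    _ = weightExpansion x d ((X + C t) * a - δ • 0) ((X + C t) * b - δ • taylor 1 (X * a))
          ((X + C t) * c - δ • taylor 1 b) ((X + C t) * e - δ • taylor 1 c)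
          - aeval (x * d) (δ • taylor 1 e) * d ^ 3 := by
        rw [hx, h1, hd, hd2, hd3]
    _ = aeval (x * d) (X + C t) * weightExpansion x d a b c e
          - δ • (d * weightExpansion x d a b c e) := by
        rw [aeval_euler_mul_weightExpansion, d_mul_weightExpansion h, weightExpansion_sub_smul,
          smul_add, ← sub_sub, map_smul, smul_mul_assoc]
    _ = ((x - δ • 1) * d + t • 1) * weightExpansion x d a b c e := by
        rw [sub_smul_mul_add_smul_eq_aeval, sub_mul, smul_mul_assoc]

/-- The operator `(θ-r)(θ-r+1)(θ-r+2)a(θ)x + (θ-r+1)(θ-r+2)b(θ) + (θ-r+2)c(θ)∂ + e(θ)∂²`, the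
shape common to all `H₅`. -/
def factoredExpansion (x d : A) (r : R) (a b c e : R[X]) : A :=
  weightExpansion x d ((X - C r) * (X - C r + 1) * (X - C r + 2) * a)
    ((X - C r + 1) * (X - C r + 2) * b) ((X - C r + 2) * c) e

theorem factoredExpansion_intertwines (h : d * x = x * d + 1) {δ : R} (r : R)
    {a b c e b' c' e' : R[X]}
    (h1 : b' - δ • (X * a) = b - δ • taylor 1 (X * a))
    (hd : c' - δ • b' = c - δ • taylor 1 b)
    (hd2 : e' - δ • c' = e - δ • taylor 1 c)
    (hd3 : δ • e' = δ • taylor 1 e) :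
    factoredExpansion x d (r - 1) a b' c' e' * ((x - δ • 1) * d + (1 - r) • 1) =
      ((x - δ • 1) * d + (3 - r) • 1) * factoredExpansion x d r a b c e := by
  have taylor_two : taylor (1 : R) (2 : R[X]) = 2 := map_ofNat (taylorAlgHom 1) 2
  apply weightExpansion_intertwines h _ _ _ _ hd3 <;>
    simp only [smul_eq_C_mul, taylor_mul, map_add, map_sub, taylor_X, taylor_C, map_one,
      taylor_one, taylor_two, map_ofNat] at h1 hd hd2 ⊢
  · ring
  · linear_combination (X - C r + 1) * (X - C r + 2) * (X - C r + 3) * h1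
  · linear_combination (X - C r + 2) * (X - C r + 3) * hd
  · linear_combination (X - C r + 3) * hd2

end WeightExpansion

theorem D_mul_M_X : D * M X = M X * D + 1 := by
  refine LinearMap.ext fun p => ?_
  simp [D, M, add_comm]

section Coefficients

/-- The polynomial `B₀`. -/
def B0Poly (e7 e8 e9 : ℂ) : ℂ[X] := (X + C e7) * (X + C e8) * (X + C e9)

/-- The polynomial `B₁`, as an element of `ℂ[X]` rather than a function of operators. -/
def B1Poly (e1 e2 e3 e4 e5 e6 e7 e8 e9 u : ℂ) : ℂ[X] :=
  C (-3) * X ^ 3 + C (T12C e1 e2 e3 e4 e5 e6 e7 e8 e9) * X ^ 2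
    + C (T11C e1 e2 e3 e4 e5 e6 e7 e8 e9) * X + C u

/-- The polynomial `B₂`, as an element of `ℂ[X]` rather than a function of operators. -/
def B2Poly (e1 e2 e3 e4 e5 e6 e7 e8 e9 u : ℂ) : ℂ[X] :=
  C 3 * X ^ 3 + C (T22C e1 e2 e3 e4 e5 e6 e7 e8 e9) * X ^ 2
    + C (T21C e1 e2 e3 e4 e5 e6 e7 e8 e9) * X + C (T20C e1 e2 e3 e4 e5 e6 e7 e8 e9 u)

/-- The polynomial `T₃ = -(X + 3 - e₁)(X + 3 - e₂)(X + 3 - e₃)`. -/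
def T3Poly (e1 e2 e3 : ℂ) : ℂ[X] := -((X + C (3 - e1)) * (X + C (3 - e2)) * (X + C (3 - e3)))

variable {e1 e2 e3 e4 e5 e6 e7 e8 e9 u u' : ℂ}

theorem B1op_eq_aeval (t : EndP) :
    B1op e1 e2 e3 e4 e5 e6 e7 e8 e9 u t = aeval t (B1Poly e1 e2 e3 e4 e5 e6 e7 e8 e9 u) := by
  simp only [B1op, B1Poly, map_add, map_mul, map_pow, aeval_C, aeval_X,
    Algebra.algebraMap_eq_smul_one, smul_one_mul]

theorem B2op_eq_aeval (t : EndP) :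
    B2op e1 e2 e3 e4 e5 e6 e7 e8 e9 u t = aeval t (B2Poly e1 e2 e3 e4 e5 e6 e7 e8 e9 u) := by
  simp only [B2op, B2Poly, map_add, map_mul, map_pow, aeval_C, aeval_X,
    Algebra.algebraMap_eq_smul_one, smul_one_mul]

theorem H5op_eq_factoredExpansion {r : ℂ}
    (hr : r = (e1 + e2 + e3 + e4 + e5 + e6 + e7 + e8 - 6) / 3) :
    H5op e1 e2 e3 e4 e5 e6 e7 e8 u =
      factoredExpansion (M X) D r ((X + C e7) * (X + C e8)) (B1Poly e1 e2 e3 e4 e5 e6 e7 e8 0 u)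
        (B2Poly e1 e2 e3 e4 e5 e6 e7 e8 0 u) (T3Poly e1 e2 e3) := by
  have linear_eq_aeval (z : ℂ) : θop + z • 1 = aeval θop (X + C z) := by
    rw [map_add, aeval_X, aeval_C, Algebra.algebraMap_eq_smul_one]
  have move_X (f : ℂ[X]) : M X * aeval θop f = aeval θop (taylor (-1) f) * M X :=
    x_mul_aeval_euler D_mul_M_X f
  have add_one_sub (z : ℂ) : X + C (1 - z) = X - C z + 1 := by rw [map_sub, C_1]; ring
  have add_two_sub (z : ℂ) : X + C (2 - z) = X - C z + 2 := by rw [map_sub, map_ofNat]; ring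
  have leading : taylor (-1) ((X + C (1 - r)) * (X + C (2 - r)) * (X + C (3 - r))
      * (X + C (e7 + 1)) * (X + C (e8 + 1)))
      = (X - C r) * (X - C r + 1) * (X - C r + 2) * ((X + C e7) * (X + C e8)) := by
    refine Polynomial.funext fun t => ?_
    simp only [taylor_eval, eval_mul, eval_add, eval_sub, eval_X, eval_C, eval_one, eval_ofNat]
    ring
  simp only [H5op, ← hr, linear_eq_aeval, B1op_eq_aeval, B2op_eq_aeval, ← map_mul, move_X,
    leading]
  have trailing : aeval θop (T3Poly e1 e2 e3) * D ^ 2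
      = -(aeval θop ((X + C (3 - e1)) * (X + C (3 - e2)) * (X + C (3 - e3))) * D ^ 2) := by
    rw [T3Poly, map_neg]
    -- The negation coming from `map_neg` is that of `EndP` only after unfolding instances.
    exact neg_mul (α := EndP) _ _
  rw [add_one_sub, add_two_sub, factoredExpansion, weightExpansion, ← θop, trailing,
    ← sub_eq_add_neg]

theorem B1Poly_firstBlock_recurrence (hu : u - u' = (e7 + 1) * (e8 + 1) * (e9 + 1) - e7 * e8 * e9) :
    B1Poly (e1 - 1) (e2 - 1) (e3 - 1) e4 e5 e6 e7 e8 e9 u' - B0Poly e7 e8 e9 =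
      B1Poly e1 e2 e3 e4 e5 e6 e7 e8 e9 u - taylor 1 (B0Poly e7 e8 e9) := by
  refine Polynomial.funext fun t => ?_
  simp only [B1Poly, B0Poly, T12C, T11C, taylor_eval, eval_add, eval_sub, eval_mul, eval_pow,
    eval_X, eval_C]
  linear_combination -hu

theorem B2Poly_firstBlock_recurrence (hu : u - u' = (e7 + 1) * (e8 + 1) * (e9 + 1) - e7 * e8 * e9) :
    B2Poly (e1 - 1) (e2 - 1) (e3 - 1) e4 e5 e6 e7 e8 e9 u'
        - B1Poly (e1 - 1) (e2 - 1) (e3 - 1) e4 e5 e6 e7 e8 e9 u' =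
      B2Poly e1 e2 e3 e4 e5 e6 e7 e8 e9 u
        - taylor 1 (B1Poly e1 e2 e3 e4 e5 e6 e7 e8 e9 u) := by
  refine Polynomial.funext fun t => ?_
  simp only [B1Poly, B2Poly, T12C, T11C, T22C, T21C, T20C, taylor_eval, eval_add, eval_sub,
    eval_mul, eval_pow, eval_X, eval_C]
  linear_combination 2 * hu

theorem T3Poly_firstBlock_recurrence (hu : u - u' = (e7 + 1) * (e8 + 1) * (e9 + 1) - e7 * e8 * e9) :
    T3Poly (e1 - 1) (e2 - 1) (e3 - 1)
        - B2Poly (e1 - 1) (e2 - 1) (e3 - 1) e4 e5 e6 e7 e8 e9 u' =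
      T3Poly e1 e2 e3 - taylor 1 (B2Poly e1 e2 e3 e4 e5 e6 e7 e8 e9 u) := by
  refine Polynomial.funext fun t => ?_
  simp only [T3Poly, B2Poly, T22C, T21C, T20C, taylor_eval, eval_add, eval_sub, eval_neg,
    eval_mul, eval_pow, eval_X, eval_C]
  linear_combination -hu

theorem T3Poly_sub_one : T3Poly (e1 - 1) (e2 - 1) (e3 - 1) = taylor 1 (T3Poly e1 e2 e3) := by
  refine Polynomial.funext fun t => ?_
  simp only [T3Poly, taylor_eval, eval_neg, eval_mul, eval_add, eval_X, eval_C]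
  ring

theorem B1Poly_secondBlock_sub_one :
    B1Poly e1 e2 e3 (e4 - 1) (e5 - 1) (e6 - 1) e7 e8 e9 u =
      B1Poly e1 e2 e3 e4 e5 e6 e7 e8 e9 u := by
  have hT11 : T11C e1 e2 e3 (e4 - 1) (e5 - 1) (e6 - 1) e7 e8 e9 =
      T11C e1 e2 e3 e4 e5 e6 e7 e8 e9 := by
    simp only [T11C]
    ring
  rw [B1Poly, B1Poly, hT11]
  rfl

theorem B2Poly_secondBlock_sub_one :
    B2Poly e1 e2 e3 (e4 - 1) (e5 - 1) (e6 - 1) e7 e8 e9 u =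
      B2Poly e1 e2 e3 e4 e5 e6 e7 e8 e9 u := by
  have hT21 : T21C e1 e2 e3 (e4 - 1) (e5 - 1) (e6 - 1) e7 e8 e9 =
      T21C e1 e2 e3 e4 e5 e6 e7 e8 e9 := by
    simp only [T21C]
    ring
  have hT20 : T20C e1 e2 e3 (e4 - 1) (e5 - 1) (e6 - 1) e7 e8 e9 u =
      T20C e1 e2 e3 e4 e5 e6 e7 e8 e9 u := by
    simp only [T20C]
    ring
  rw [B2Poly, B2Poly, hT21, hT20]
  rfl

end Coefficients

theorem H5op_shift_firstBlock {e1 e2 e3 e4 e5 e6 e7 e8 u u' r : ℂ}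
    (hr : r = (e1 + e2 + e3 + e4 + e5 + e6 + e7 + e8 - 6) / 3)
    (hu : u - u' = (e7 + 1) * (e8 + 1)) :
    H5op (e1 - 1) (e2 - 1) (e3 - 1) e4 e5 e6 e7 e8 u' * (M (X - 1) * D + (1 - r) • 1) =
      (M (X - 1) * D + (3 - r) • 1) * H5op e1 e2 e3 e4 e5 e6 e7 e8 u := by
  have hr' : r - 1 = (e1 - 1 + (e2 - 1) + (e3 - 1) + e4 + e5 + e6 + e7 + e8 - 6) / 3 := by
    linear_combination hr
  have hB0 : X * ((X + C e7) * (X + C e8)) = B0Poly e7 e8 0 := by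
    rw [B0Poly, C_0]
    ring
  have hM : M (X - 1) = M X - (1 : ℂ) • 1 := by
    refine LinearMap.ext fun p => ?_
    simp [M, sub_mul]
  have hu₀ : u - u' = (e7 + 1) * (e8 + 1) * (0 + 1) - e7 * e8 * 0 := by
    linear_combination hu
  rw [H5op_eq_factoredExpansion hr, H5op_eq_factoredExpansion hr', hM]
  apply factoredExpansion_intertwines D_mul_M_X <;> simp only [one_smul, hB0]
  · exact B1Poly_firstBlock_recurrence hu₀
  · exact B2Poly_firstBlock_recurrence hu₀
  · exact T3Poly_firstBlock_recurrence hu₀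
  · exact T3Poly_sub_one

theorem H5op_shift_secondBlock {e1 e2 e3 e4 e5 e6 e7 e8 u r : ℂ}
    (hr : r = (e1 + e2 + e3 + e4 + e5 + e6 + e7 + e8 - 6) / 3) :
    H5op e1 e2 e3 (e4 - 1) (e5 - 1) (e6 - 1) e7 e8 u * (M X * D + (1 - r) • 1) =
      (M X * D + (3 - r) • 1) * H5op e1 e2 e3 e4 e5 e6 e7 e8 u := by
  have hr' : r - 1 = (e1 + e2 + e3 + (e4 - 1) + (e5 - 1) + (e6 - 1) + e7 + e8 - 6) / 3 := by
    linear_combination hr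
  rw [H5op_eq_factoredExpansion hr, H5op_eq_factoredExpansion hr', B1Poly_secondBlock_sub_one,
    B2Poly_secondBlock_sub_one]
  simpa only [zero_smul, sub_zero] using
    factoredExpansion_intertwines (δ := 0) D_mul_M_X r (by simp) (by simp) (by simp) (by simp)

/-- Shift operators of `H₅` for the descending block shifts: for suitable accessory
parameters `u′, u″`,
`H₅(e₁−1,e₂−1,e₃−1,e₄,…,e₈,u′) ∘ ((x−1)∂ + 1 − r) = ((x−1)∂ + 3 − r) ∘ H₅(e,u)` and
`H₅(e₁,e₂,e₃,e₄−1,e₅−1,e₆−1,e₇,e₈,u″) ∘ (x∂ + 1 − r) = (x∂ + 3 − r) ∘ H₅(e,u)`. -/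
theorem H5_shift_operators_descending (e1 e2 e3 e4 e5 e6 e7 e8 u r : ℂ)
    (hr : r = (e1 + e2 + e3 + e4 + e5 + e6 + e7 + e8 - 6) / 3) :
    (∃ u' : ℂ,
      H5op (e1 - 1) (e2 - 1) (e3 - 1) e4 e5 e6 e7 e8 u'
          * (M (X - 1) * D + (1 - r) • 1)
        = (M (X - 1) * D + (3 - r) • 1) * H5op e1 e2 e3 e4 e5 e6 e7 e8 u) ∧
    (∃ u'' : ℂ,
      H5op e1 e2 e3 (e4 - 1) (e5 - 1) (e6 - 1) e7 e8 u''
          * (M X * D + (1 - r) • 1)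
        = (M X * D + (3 - r) • 1) * H5op e1 e2 e3 e4 e5 e6 e7 e8 u) := by
  exact ⟨⟨u - (e7 + 1) * (e8 + 1), H5op_shift_firstBlock hr (sub_sub_cancel _ _)⟩,
    ⟨u, H5op_shift_secondBlock hr⟩⟩
end
end
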